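/- For the PR2 channel h(D) = 1 + 2D + D² and any 0 ≤ ε ≤ 1/2, the infimum over all error events (eᵃ, eᵇ) of d²_ML(eᵃ,eᵇ) = ((1+ε)²/2)·‖e⁺∗h‖² + ((1−ε)²/2)·‖e⁻∗h‖² is attained and equals 16(1+ε²) if 0 ≤ ε ≤ 2−√3, and equals 32(1−ε)² if 2−√3 ≤ ε ≤ 1/2. -/

import Mathlib

/-!
Writing `eᵃ = 2u`, `eᵇ = 2v` with integer sequences `u, v`, the theorem rests on one fact
(`four_le_finsum_sq`): for a nonzero, finitely supported integer sequence `f`, the sequence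
`q = f ∗ (1 + D)²` satisfies `Σ q² ≥ 4`. Indeed `q` has a double zero at `D = -1`, so
`r k = (-1)^k q k` satisfies `Σ r = 0` and `Σ k r = 0`. A nonzero integer sequence with these two
vanishing moments has at least three nonzero entries, so `Σ r² ≥ 3`; and `Σ r² ≡ Σ r = 0 (mod 2)`,
so `Σ r² ≥ 4`.

If `e⁺` and `e⁻` are both nonzero, then each has energy at least `4·4`, so `d² ≥ 16(1 + ε²)`. If
`e⁺ = 0`, then `e⁻ = 2eᵃ = 4u` has energy at least `16·4`, so `d² ≥ 32(1 - ε)²`, and if `e⁻ = 0`, then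
likewise `d² ≥ 32(1 + ε)²`, which is at least as large as both other bounds. The first two bounds are attained with
`eᵃ = 2 - 2D` and `eᵇ = 0`, respectively `eᵇ = -eᵃ`. They cross where `(2 - ε)² = 3`,
that is, at `ε = 2 - √3`.
-/

/-- The filtered error sequence `(e∗h)_k = Σ_{i=0}^{ν} h_i e_{k−i}`. -/
noncomputable def filt (ν : ℕ) (h : ℕ → ℝ) (e : ℤ → ℝ) (k : ℤ) : ℝ :=
  ∑ i ∈ Finset.range (ν + 1), h i * e (k - i)

/-- The energy `‖e∗h‖² = Σ_{k∈ℤ} (e∗h)_k²`. -/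
noncomputable def energy (ν : ℕ) (h : ℕ → ℝ) (e : ℤ → ℝ) : ℝ :=
  ∑ᶠ k : ℤ, (filt ν h e k) ^ 2

/-- A finitely supported sequence taking values in {−2, 0, 2}. -/
def Admissible (e : ℤ → ℝ) : Prop :=
  (Function.support e).Finite ∧ ∀ k, e k ∈ ({-2, 0, 2} : Set ℝ)

/-- The PR2 channel `h(D) = 1 + 2D + D²`. -/
noncomputable def pr2 : ℕ → ℝ := fun i => if i = 0 then 1 else if i = 1 then 2 else if i = 2 then 1 else 0

open Function

/-! ### Integer sequences with two vanishing moments -/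

/-- A nonzero integer sequence whose zeroth and first moments vanish has at least three nonzero
entries and an even sum of squares. -/
lemma four_le_sum_sq_of_moments (S : Finset ℤ) (r : ℤ → ℤ) (hS : ∃ a ∈ S, r a ≠ 0)
    (h0 : ∑ k ∈ S, r k = 0) (h1 : ∑ k ∈ S, k * r k = 0) : 4 ≤ ∑ k ∈ S, r k ^ 2 := by
  obtain ⟨a, ha, hra⟩ := hS
  obtain ⟨b, hb, hba, hrb⟩ : ∃ b ∈ S, b ≠ a ∧ r b ≠ 0 := by
    by_contra! H
    rw [Finset.sum_eq_single_of_mem a ha H] at h0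
    exact hra h0
  obtain ⟨c, hc, hca, hcb, hrc⟩ : ∃ c ∈ S, c ≠ a ∧ c ≠ b ∧ r c ≠ 0 := by
    by_contra! H
    -- With only two nonzero entries, the moment `Σ (k - b) r k = (a - b) r a` would not vanish.
    have h2 : ∑ k ∈ S, (k - b) * r k = 0 := by
      simp only [sub_mul, Finset.sum_sub_distrib, h1, ← Finset.mul_sum, h0]
      simp
    rw [Finset.sum_eq_single_of_mem a ha] at h2
    · rcases mul_eq_zero.1 h2 with h | h
      · exact hba (by linarith)
      · exact hra h
    · intro k hk hka
      by_cases hkb : k = b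
      · simp [hkb]
      · simp [H k hk hka hkb]
  have h3 : 3 ≤ ∑ k ∈ S, r k ^ 2 := by
    have hsub : ({a, b, c} : Finset ℤ) ⊆ S := by
      intro x hx
      simp only [Finset.mem_insert, Finset.mem_singleton] at hx
      rcases hx with rfl | rfl | rfl <;> assumption
    have hle := Finset.sum_le_sum_of_subset_of_nonneg (f := fun k => r k ^ 2) hsub
      (fun i _ _ => sq_nonneg (r i))
    rw [Finset.sum_insert (by simp [hba.symm, hca.symm]),
      Finset.sum_insert (by simpa using hcb.symm), Finset.sum_singleton] at hle
    have := pow_pos (abs_pos.2 hra) 2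
    have := pow_pos (abs_pos.2 hrb) 2
    have := pow_pos (abs_pos.2 hrc) 2
    simp only [sq_abs] at *
    linarith
  have heven : (2 : ℤ) ∣ ∑ k ∈ S, r k ^ 2 := by
    have : ∑ k ∈ S, r k ^ 2 = ∑ k ∈ S, (r k ^ 2 - r k) := by
      rw [Finset.sum_sub_distrib, h0, sub_zero]
    rw [this]
    refine Finset.dvd_sum fun k _ => ?_
    have h := Int.even_mul_pred_self (r k)
    have h' : r k ^ 2 - r k = r k * (r k - 1) := by ring
    rw [h']
    exact h.two_dvd
  omega

/-! ### The integer PR2 channel -/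

/-- The sequence `f ∗ (1 + 2D + D²)` over the integers. -/
def pr2Int (f : ℤ → ℤ) (k : ℤ) : ℤ := f k + 2 * f (k - 1) + f (k - 2)

lemma finite_support_shift {f : ℤ → ℤ} (hf : (support f).Finite) (n : ℤ) :
    (support fun k => f (k - n)).Finite :=
  hf.preimage (f := fun k : ℤ => k - n) (sub_left_injective.injOn)

lemma finite_support_pr2Int {f : ℤ → ℤ} (hf : (support f).Finite) :
    (support (pr2Int f)).Finite := by
  refine ((hf.union (finite_support_shift hf 1)).union (finite_support_shift hf 2)).subset ?_
  intro k hk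
  by_contra h
  simp only [Set.mem_union, mem_support, not_or, not_not] at h
  exact hk (by simp [pr2Int, h])

/-- At the least index of its support, `f` and `f ∗ h` agree. -/
lemma exists_pr2Int_ne_zero {f : ℤ → ℤ} (hf : (support f).Finite) (h0 : f ≠ 0) :
    ∃ a, pr2Int f a ≠ 0 := by
  obtain ⟨a, ha, hmin⟩ := Set.exists_min_image (support f) id hf (support_nonempty_iff.2 h0)
  have hz : ∀ k < a, f k = 0 := fun k hk => by
    by_contra h
    exact absurd (hmin k h) (not_le.2 hk)
  refine ⟨a, ?_⟩
  simpa [pr2Int, hz (a - 1) (by omega), hz (a - 2) (by omega)] using ha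

/-- Summation by parts: the operator `f ↦ f ∗ h` has adjoint `φ ↦ φ k + 2 φ (k+1) + φ (k+2)`. -/
lemma finsum_mul_pr2Int {f : ℤ → ℤ} (hf : (support f).Finite) (φ : ℤ → ℤ) :
    ∑ᶠ k, φ k * pr2Int f k = ∑ᶠ k, (φ k + 2 * φ (k + 1) + φ (k + 2)) * f k := by
  have hs : ∀ n : ℤ, ∑ᶠ k, φ k * f (k - n) = ∑ᶠ k, φ (k + n) * f k := fun n => by
    rw [← finsum_comp_equiv (Equiv.addRight n)]
    simp
  have hfin : ∀ (n : ℤ) (ψ : ℤ → ℤ), (support fun k => ψ k * f (k - n)).Finite := fun n ψ =>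
    (finite_support_shift hf n).subset (support_mul_subset_right ψ _)
  have hfin0 : ∀ ψ : ℤ → ℤ, (support fun k => ψ k * f k).Finite := fun ψ => by
    simpa using hfin 0 ψ
  have h2 : (support fun k => 2 * (φ k * f (k - 1))).Finite :=
    (hfin 1 φ).subset (support_mul_subset_right _ _)
  have h2' : (support fun k => 2 * (φ (k + 1) * f k)).Finite :=
    (hfin0 fun k => φ (k + 1)).subset (support_mul_subset_right _ _)
  have hadd : ∀ {F G : ℤ → ℤ}, (support F).Finite → (support G).Finite →
      (support fun k => F k + G k).Finite := fun hF hG =>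
    (hF.union hG).subset (support_add _ _)
  calc ∑ᶠ k, φ k * pr2Int f k
      = ∑ᶠ k, ((φ k * f k + 2 * (φ k * f (k - 1))) + φ k * f (k - 2)) :=
        finsum_congr fun k => by simp only [pr2Int]; ring
    _ = ∑ᶠ k, ((φ k * f k + 2 * (φ (k + 1) * f k)) + φ (k + 2) * f k) := by
        rw [finsum_add_distrib (hadd (hfin0 φ) h2) (hfin 2 φ), finsum_add_distrib (hfin0 φ) h2,
          finsum_add_distrib (hadd (hfin0 φ) h2') (hfin0 fun k => φ (k + 2)),
          finsum_add_distrib (hfin0 φ) h2', hs 2, ← mul_finsum, ← mul_finsum, hs 1]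
    _ = _ := finsum_congr fun k => by ring

/-- Minimum energy over the integers: with `φ k = (-1)^k` and `φ k = k (-1)^k`, the adjoint of the
filter annihilates `φ`, so `(-1)^k (f ∗ h)_k` has two vanishing moments. -/
lemma four_le_finsum_sq {f : ℤ → ℤ} (hf : (support f).Finite) (h0 : f ≠ 0) :
    4 ≤ ∑ᶠ k, pr2Int f k ^ 2 := by
  set s : ℤ → ℤ := fun k => (k.negOnePow : ℤ) with hs
  have hs1 : ∀ k, s (k + 1) = - s k := fun k => by simp [hs, Int.negOnePow_succ]
  have hs2 : ∀ k, s (k + 2) = s k := fun k => by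
    rw [show k + 2 = k + 1 + 1 by ring, hs1, hs1, neg_neg]
  have hsq : ∀ k, s k ^ 2 = 1 := fun k => by
    rcases Int.units_eq_one_or k.negOnePow with h | h <;> simp [hs, h]
  have m0 : ∑ᶠ k, s k * pr2Int f k = 0 := by
    rw [finsum_mul_pr2Int hf]
    simp only [hs1, hs2]
    rw [← finsum_zero (α := ℤ)]
    exact finsum_congr fun k => by ring
  have m1 : ∑ᶠ k, (k * s k) * pr2Int f k = 0 := by
    rw [finsum_mul_pr2Int hf fun k => k * s k]
    simp only [hs1, hs2]
    rw [← finsum_zero (α := ℤ)]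
    exact finsum_congr fun k => by ring
  have hq := finite_support_pr2Int hf
  have hS : ∀ φ : ℤ → ℤ, support (fun k => φ k * pr2Int f k) ⊆ hq.toFinset := fun φ => by
    rw [hq.coe_toFinset]
    exact support_mul_subset_right _ _
  obtain ⟨a, ha⟩ := exists_pr2Int_ne_zero hf h0
  rw [finsum_eq_sum_of_support_subset _ (hS _)] at m0 m1
  have key := four_le_sum_sq_of_moments hq.toFinset (fun k => s k * pr2Int f k)
    ⟨a, by simpa using ha, fun h => ha (by
      have := hsq a
      rcases mul_eq_zero.1 h with h | h
      · simp [h] at this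
      · exact h)⟩ m0 (by simpa only [mul_assoc] using m1)
  rw [finsum_eq_sum_of_support_subset (s := hq.toFinset) _ (by
    simpa only [sq] using hS (pr2Int f))]
  simpa only [mul_pow, hsq, one_mul] using key

/-! ### Real error sequences -/

lemma filt_pr2 (e : ℤ → ℝ) (k : ℤ) : filt 2 pr2 e k = e k + 2 * e (k - 1) + e (k - 2) := by
  simp [filt, pr2, Finset.sum_range_succ]

/-- The minimum energy of a nonzero sequence with values in `cℤ`. -/
lemma energy_lower {e : ℤ → ℝ} {f : ℤ → ℤ} (c : ℝ) (he : ∀ k, e k = c * f k)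
    (hf : (support f).Finite) (h0 : f ≠ 0) : 4 * c ^ 2 ≤ energy 2 pr2 e := by
  have hE : energy 2 pr2 e = c ^ 2 * ((∑ᶠ k, pr2Int f k ^ 2 : ℤ) : ℝ) := by
    have hfin : (support fun k => pr2Int f k ^ 2).Finite :=
      (finite_support_pr2Int hf).subset (by
        simpa only [sq] using support_mul_subset_right (pr2Int f) (pr2Int f))
    have hcast := (Int.castAddHom ℝ).map_finsum hfin
    simp only [Int.coe_castAddHom] at hcast
    rw [hcast, ← smul_eq_mul, smul_finsum, energy]
    refine finsum_congr fun k => ?_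
    rw [filt_pr2, he, he, he, smul_eq_mul, pr2Int]
    push_cast
    ring
  have h4 : (4 : ℝ) ≤ ((∑ᶠ k, pr2Int f k ^ 2 : ℤ) : ℝ) := by
    exact_mod_cast four_le_finsum_sq hf h0
  rw [hE]
  nlinarith [sq_nonneg c]

lemma energy_zero : energy 2 pr2 (fun _ => 0) = 0 := by
  simp [energy, filt_pr2]

lemma energy_smul (c : ℝ) (e : ℤ → ℝ) :
    energy 2 pr2 (fun k => c * e k) = c ^ 2 * energy 2 pr2 e := by
  rw [energy, energy, ← smul_eq_mul, smul_finsum]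
  refine finsum_congr fun k => ?_
  rw [filt_pr2, filt_pr2, smul_eq_mul]
  ring

lemma Admissible.exists_int {e : ℤ → ℝ} (he : Admissible e) :
    ∃ u : ℤ → ℤ, (∀ k, e k = 2 * u k) ∧ (support u).Finite := by
  have h : ∀ k, ∃ n : ℤ, e k = 2 * n := fun k => by
    rcases he.2 k with h | h | h
    · exact ⟨-1, by rw [h]; norm_num⟩
    · exact ⟨0, by rw [h]; norm_num⟩
    · exact ⟨1, by rw [Set.mem_singleton_iff.1 h]; norm_num⟩
  choose u hu using h
  refine ⟨u, hu, he.1.subset fun k hk => ?_⟩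
  simpa [hu] using hk

/-- The error sequence `2 - 2D`, of minimum energy. -/
noncomputable def eMin (k : ℤ) : ℝ := if k = 0 then 2 else if k = 1 then -2 else 0

lemma admissible_eMin : Admissible eMin := by
  constructor
  · refine (Set.toFinite ({0, 1} : Set ℤ)).subset fun k hk => ?_
    by_contra h
    simp only [Set.mem_insert_iff, Set.mem_singleton_iff, not_or] at h
    exact hk (by simp [eMin, h])
  · intro k
    unfold eMin
    split_ifs <;> simp

lemma Admissible.neg {e : ℤ → ℝ} (he : Admissible e) : Admissible (fun k => -e k) := by
  refine ⟨by simpa [support_fun_neg] using he.1, fun k => ?_⟩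
  rcases he.2 k with h | h | h <;> simp_all

lemma eMin_ne_zero : eMin ≠ 0 := fun h => by
  simpa [eMin] using congrFun h 0

lemma energy_eMin : energy 2 pr2 eMin = 16 := by
  rw [energy, finsum_eq_sum_of_support_subset (s := {0, 1, 2, 3})]
  · simp [filt_pr2, eMin]
    norm_num
  · intro k hk
    by_contra h
    simp only [Finset.coe_insert, Finset.coe_singleton, Set.mem_insert_iff,
      Set.mem_singleton_iff, not_or] at h
    refine hk ?_
    have h1 : ¬ k - 1 = 0 := by omega
    have h2 : ¬ k - 1 = 1 := by omega
    have h3 : ¬ k - 2 = 0 := by omega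
    have h4 : ¬ k - 2 = 1 := by omega
    simp [filt_pr2, eMin, h, h1, h2, h3, h4]

/-! ### The minimum distance -/

/-- The two competing lower bounds, without deciding which one is smaller. -/
lemma distance_lower {ε : ℝ} (hε0 : 0 ≤ ε) {ea eb : ℤ → ℝ} (ha : Admissible ea)
    (hb : Admissible eb) (hne : ¬ (ea = 0 ∧ eb = 0)) :
    min (16 * (1 + ε ^ 2)) (32 * (1 - ε) ^ 2) ≤
      (1 + ε)^2 / 2 * energy 2 pr2 (fun k => ea k + eb k)
        + (1 - ε)^2 / 2 * energy 2 pr2 (fun k => ea k - eb k) := by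
  obtain ⟨u, hu, hfu⟩ := ha.exists_int
  obtain ⟨v, hv, hfv⟩ := hb.exists_int
  have hp0 := sq_nonneg (1 + ε)
  have hm0 := sq_nonneg (1 - ε)
  by_cases hp : u + v = 0
  · refine (min_le_right _ _).trans ?_
    have huv : ∀ k, v k = -u k := fun k => by
      have := congrFun hp k
      simp only [Pi.add_apply, Pi.zero_apply] at this
      omega
    have hu0 : u ≠ 0 := fun h => hne ⟨funext fun k => by simp [hu, h],
      funext fun k => by simp [hv, huv, h]⟩
    have hE := energy_lower (e := fun k => ea k - eb k) 4
      (fun k => by rw [hu, hv, huv]; push_cast; ring) hfu hu0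
    have hz : (fun k => ea k + eb k) = fun _ => 0 := funext fun k => by
      rw [hu, hv, huv]; push_cast; ring
    rw [hz, energy_zero]
    nlinarith
  by_cases hm : u - v = 0
  · refine (min_le_left _ _).trans ?_
    have huv : v = u := (sub_eq_zero.1 hm).symm
    subst huv
    have hu0 : v ≠ 0 := fun h => hne ⟨funext fun k => by simp [hu, h],
      funext fun k => by simp [hv, h]⟩
    have hE := energy_lower (e := fun k => ea k + eb k) 4
      (fun k => by rw [hu, hv]; ring) hfv hu0
    have hz : (fun k => ea k - eb k) = fun _ => 0 := funext fun k => by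
      rw [hu, hv]; ring
    rw [hz, energy_zero]
    nlinarith
  · refine (min_le_left _ _).trans ?_
    have hEp := energy_lower (e := fun k => ea k + eb k) 2
      (fun k => by rw [hu, hv]; push_cast; ring)
      ((hfu.union hfv).subset (support_add u v)) hp
    have hEm := energy_lower (e := fun k => ea k - eb k) 2
      (fun k => by rw [hu, hv]; push_cast; ring)
      ((hfu.union hfv).subset (support_sub u v)) hm
    nlinarith

theorem ml_min_distance_pr2 (ε : ℝ) (hε0 : 0 ≤ ε) (hε : ε ≤ 1/2) :
    (ε ≤ 2 - Real.sqrt 3 →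
      IsLeast {x | ∃ ea eb : ℤ → ℝ, Admissible ea ∧ Admissible eb ∧ ¬ (ea = 0 ∧ eb = 0) ∧
          x = (1 + ε)^2 / 2 * energy 2 pr2 (fun k => ea k + eb k)
              + (1 - ε)^2 / 2 * energy 2 pr2 (fun k => ea k - eb k)}
        (16 * (1 + ε^2))) ∧
    (2 - Real.sqrt 3 ≤ ε →
      IsLeast {x | ∃ ea eb : ℤ → ℝ, Admissible ea ∧ Admissible eb ∧ ¬ (ea = 0 ∧ eb = 0) ∧
          x = (1 + ε)^2 / 2 * energy 2 pr2 (fun k => ea k + eb k)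
              + (1 - ε)^2 / 2 * energy 2 pr2 (fun k => ea k - eb k)}
        (32 * (1 - ε)^2)) := by
  have h3 : Real.sqrt 3 ^ 2 = 3 := Real.sq_sqrt (by norm_num)
  have h3' := Real.sqrt_nonneg 3
  refine ⟨fun h => ⟨⟨eMin, 0, admissible_eMin, ⟨by simp, fun k => by simp⟩,
      fun h => eMin_ne_zero h.1, ?_⟩, ?_⟩,
    fun h => ⟨⟨eMin, fun k => -eMin k, admissible_eMin, admissible_eMin.neg,
      fun h => eMin_ne_zero h.1, ?_⟩, ?_⟩⟩
  · simp only [Pi.zero_apply, add_zero, sub_zero]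
    rw [show (fun k => eMin k) = eMin from rfl, energy_eMin]
    ring
  · rintro x ⟨ea, eb, ha, hb, hne, rfl⟩
    refine le_trans (le_min le_rfl ?_) (distance_lower hε0 ha hb hne)
    -- The difference of the two bounds is `16((2 - ε)² - 3)`.
    nlinarith
  · have h1 : (fun k => eMin k + -eMin k) = fun _ => 0 := funext fun k => by ring
    have h2 : (fun k => eMin k - -eMin k) = fun k => 2 * eMin k := funext fun k => by ring
    rw [h1, h2, energy_zero, energy_smul, energy_eMin]
    ring
  · rintro x ⟨ea, eb, ha, hb, hne, rfl⟩
    refine le_trans (le_min ?_ le_rfl) (distance_lower hε0 ha hb hne)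
    nlinarith
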